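/- Let q ∈ [−1,1] and let (m_l)_{l≥3} be a sequence of integers with |m_l| ≤ l for all l and lim_{l→∞} m_l/l = q. Then lim_{l→∞} Cpe(l, m_l) = −(525/(32π))·q⁴·(1 − q²). -/

import Mathlib

/-- The common square term Q(l,m). -/
noncomputable def Qf (l : ℕ) (m : ℤ) : ℝ :=
  (1 / 8) * (((l : ℝ) ^ 2 - (m : ℝ) ^ 2) / ((2 * (l : ℝ) + 1) * (2 * (l : ℝ) - 1)) +
    (((l : ℝ) + 1) ^ 2 - (m : ℝ) ^ 2) / ((2 * (l : ℝ) + 3) * (2 * (l : ℝ) + 1)) - 1 / 5) ^ 2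

/-- The coefficient ϑ(l,m). -/
noncomputable def thf (l : ℕ) (m : ℤ) : ℝ :=
  (1 / 8) * ((((l : ℝ) + 2) ^ 2 - (m : ℝ) ^ 2) * (((l : ℝ) + 1) ^ 2 - (m : ℝ) ^ 2) *
      ((l : ℝ) + 1) * (l : ℝ)) /
    ((2 * (l : ℝ) + 3) ^ 2 * (2 * (l : ℝ) + 5) * (2 * (l : ℝ) + 1) * ((l : ℝ) + 2) * ((l : ℝ) + 3)) +
  (1 / 8) * ((((l : ℝ) - 1) ^ 2 - (m : ℝ) ^ 2) * ((l : ℝ) ^ 2 - (m : ℝ) ^ 2) *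
      ((l : ℝ) + 1) * (l : ℝ)) /
    ((2 * (l : ℝ) - 3) * (2 * (l : ℝ) - 1) ^ 2 * (2 * (l : ℝ) + 1) * ((l : ℝ) - 2) * ((l : ℝ) - 1)) +
  Qf l m

/-- The coefficient ϱ(l,m). -/
noncomputable def rhf (l : ℕ) (m : ℤ) : ℝ :=
  (1 / 8) * ((((l : ℝ) + 2) ^ 2 - (m : ℝ) ^ 2) * (((l : ℝ) + 1) ^ 2 - (m : ℝ) ^ 2)) /
    ((2 * (l : ℝ) + 1) * (2 * (l : ℝ) + 3) ^ 2 * (2 * (l : ℝ) + 5)) +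
  (1 / 8) * ((((l : ℝ) - 1) ^ 2 - (m : ℝ) ^ 2) * ((l : ℝ) ^ 2 - (m : ℝ) ^ 2)) /
    ((2 * (l : ℝ) - 3) * (2 * (l : ℝ) - 1) ^ 2 * (2 * (l : ℝ) + 1)) +
  Qf l m

/-- The coefficient γ(l,m). -/
noncomputable def gaf (l : ℕ) (m : ℤ) : ℝ :=
  (1 / 8) * ((((l : ℝ) + 2) ^ 2 - (m : ℝ) ^ 2) * (((l : ℝ) + 1) ^ 2 - (m : ℝ) ^ 2) *
      ((l : ℝ) + 2) * ((l : ℝ) + 3)) /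
    ((2 * (l : ℝ) + 1) * (2 * (l : ℝ) + 3) ^ 2 * (2 * (l : ℝ) + 5) * ((l : ℝ) + 1) * (l : ℝ)) +
  (1 / 8) * ((((l : ℝ) - 1) ^ 2 - (m : ℝ) ^ 2) * ((l : ℝ) ^ 2 - (m : ℝ) ^ 2) *
      ((l : ℝ) - 2) * ((l : ℝ) - 1)) /
    ((2 * (l : ℝ) - 3) * (2 * (l : ℝ) - 1) ^ 2 * (2 * (l : ℝ) + 1) * ((l : ℝ) + 1) * (l : ℝ)) +
  Qf l m

/-- The sectional curvature C(e⁰₃, e^m_l) of SDiff(𝕊²) (Theorem 5.3 of the paper). -/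
noncomputable def Cpe (l : ℕ) (m : ℤ) : ℝ :=
  -(525 * (m : ℝ) ^ 2 / (32 * Real.pi)) *
    (3 * gaf l m - 2 * (12 / ((l : ℝ) * ((l : ℝ) + 1)) + 1) * rhf l m -
      (12 / ((l : ℝ) * ((l : ℝ) + 1)) - 1) ^ 2 * thf l m)

/-!
All coefficients are built from `r s = (s² - m²) / (4 s² - 1)`, the squared coefficient of the
recursion for `cos θ · Y`, and from the Laplace eigenvalues `λ l = l (l + 1)`. With
`ε = λ 3 / λ l` and `δ± = λ (l ± 2) / λ l - 1`, the bracket in `Cpe` is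
`a₊ (4 δ₊ - (δ₊ + ε)² / (1 + δ₊)) + a₋ (4 δ₋ - (δ₋ + ε)² / (1 + δ₋)) - ε² Q`, where
`a₊ = r (l + 1) r (l + 2) / 8` and `a₋ = r (l - 1) r l / 8`. Since `l δ± → ±4`,
`l² (δ₊ + δ₋) → 8` and `l ε → 0`, the contributions of the common limit of `a₊` and `a₋` to
`l²` times the bracket cancel, and what remains is `16 lim l (a₊ - a₋) = q² (1 - q²)`.
-/

open Filter Topology

/-- The eigenvalue of `-Δ` on spherical harmonics of degree `l`, extended to real `l`. -/
noncomputable def laplaceEigenvalue (l : ℝ) : ℝ := l * (l + 1)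

/-- The square of the coefficient `A s` in the recursion
`cos θ · Y_l^m = A (l + 1) · Y_{l+1}^m + A l · Y_{l-1}^m` for normalized spherical harmonics,
extended to real `s` and `m`. -/
noncomputable def ladderCoeff (s m : ℝ) : ℝ :=
  (s ^ 2 - m ^ 2) / ((2 * s + 1) * (2 * s - 1))

/-- One eighth of the square of the coefficient with which `cos² θ` couples the spherical harmonics
of degrees `s - 1` and `s + 1`; the factor `1 / 8` is the normalization of `thf`, `rhf`, `gaf`. -/
noncomputable def couplingCoeff (s m : ℝ) : ℝ :=
  ladderCoeff s m * ladderCoeff (s + 1) m / 8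

/-- The total factor of a coupling coefficient in the bracket of `Cpe`, where `g` is the ratio of
the two coupled Laplace eigenvalues and `ε` stands for `12 / (l (l + 1))`. -/
noncomputable def couplingWeight (g ε : ℝ) : ℝ :=
  3 * g - 2 * (ε + 1) - (ε - 1) ^ 2 / g

/-- The bracket of `Cpe`, collected by coupling coefficients. -/
noncomputable def curvatureBracket (l m : ℝ) : ℝ :=
  couplingCoeff (l + 1) m *
      couplingWeight (laplaceEigenvalue (l + 2) / laplaceEigenvalue l) (12 / laplaceEigenvalue l) +
    couplingCoeff (l - 1) m *
      couplingWeight (laplaceEigenvalue (l - 2) / laplaceEigenvalue l) (12 / laplaceEigenvalue l) -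
    (12 / laplaceEigenvalue l) ^ 2 * ((ladderCoeff l m + ladderCoeff (l + 1) m - 1 / 5) ^ 2 / 8)

lemma Qf_eq_ladderCoeff (l : ℕ) (m : ℤ) :
    Qf l m = (ladderCoeff l m + ladderCoeff (l + 1) m - 1 / 5) ^ 2 / 8 := by
  unfold Qf ladderCoeff
  ring

lemma rhf_eq_couplingCoeff (l : ℕ) (m : ℤ) :
    rhf l m = couplingCoeff (l + 1) m + couplingCoeff (l - 1) m + Qf l m := by
  unfold rhf couplingCoeff ladderCoeff
  simp only [div_eq_mul_inv, mul_inv, ← inv_pow]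
  ring

lemma gaf_eq_couplingCoeff (l : ℕ) (m : ℤ) :
    gaf l m = couplingCoeff (l + 1) m * (laplaceEigenvalue (l + 2) / laplaceEigenvalue l) +
      couplingCoeff (l - 1) m * (laplaceEigenvalue (l - 2) / laplaceEigenvalue l) + Qf l m := by
  unfold gaf couplingCoeff ladderCoeff laplaceEigenvalue
  simp only [div_eq_mul_inv, mul_inv, ← inv_pow]
  ring

lemma thf_eq_couplingCoeff (l : ℕ) (m : ℤ) :
    thf l m = couplingCoeff (l + 1) m / (laplaceEigenvalue (l + 2) / laplaceEigenvalue l) +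
      couplingCoeff (l - 1) m / (laplaceEigenvalue (l - 2) / laplaceEigenvalue l) + Qf l m := by
  unfold thf couplingCoeff ladderCoeff laplaceEigenvalue
  simp only [div_eq_mul_inv, mul_inv, inv_inv, ← inv_pow]
  ring

lemma Cpe_eq_curvatureBracket (l : ℕ) (m : ℤ) :
    Cpe l m = -(525 / (32 * Real.pi)) * (m : ℝ) ^ 2 * curvatureBracket l m := by
  rw [Cpe, gaf_eq_couplingCoeff, rhf_eq_couplingCoeff, thf_eq_couplingCoeff, Qf_eq_ladderCoeff,
    curvatureBracket, couplingWeight, couplingWeight, ← laplaceEigenvalue]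
  ring

lemma couplingWeight_eq_sub_sq_div {g : ℝ} (hg : g ≠ 0) (ε : ℝ) :
    couplingWeight g ε = 4 * (g - 1) - (g - 1 + ε) ^ 2 / g := by
  unfold couplingWeight
  field_simp
  ring

lemma ladderCoeff_sub_ladderCoeff {s t : ℝ} (m : ℝ) (hs : (2 * s + 1) * (2 * s - 1) ≠ 0)
    (ht : (2 * t + 1) * (2 * t - 1) ≠ 0) :
    ladderCoeff s m - ladderCoeff t m =
      (4 * m ^ 2 - 1) * (s ^ 2 - t ^ 2) /
        (((2 * s + 1) * (2 * s - 1)) * ((2 * t + 1) * (2 * t - 1))) := by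
  rw [ladderCoeff, ladderCoeff, div_sub_div _ _ hs ht]
  ring

lemma couplingCoeff_sub_couplingCoeff (s t m : ℝ) :
    couplingCoeff s m - couplingCoeff t m =
      ((ladderCoeff s m - ladderCoeff t m) * ladderCoeff (s + 1) m +
        ladderCoeff t m * (ladderCoeff (s + 1) m - ladderCoeff (t + 1) m)) / 8 := by
  unfold couplingCoeff
  ring

section Asymptotics

variable {ι : Type*} {F : Filter ι} {l m : ι → ℝ} {q : ℝ}

lemma tendsto_linear_div_self (hl : Tendsto l F atTop) (a c : ℝ) :
    Tendsto (fun i => (a * l i + c) / l i) F (𝓝 a) := by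
  have h : Tendsto (fun i => a + c / l i) F (𝓝 (a + 0)) := (hl.const_div_atTop c).const_add a
  rw [add_zero] at h
  refine h.congr' ?_
  filter_upwards [hl.eventually_ne_atTop 0] with i hi
  field_simp

lemma tendsto_laplaceEigenvalue_div_sq (hl : Tendsto l F atTop) :
    Tendsto (fun i => laplaceEigenvalue (l i) / l i ^ 2) F (𝓝 1) := by
  refine (tendsto_linear_div_self hl 1 1).congr' ?_
  filter_upwards [hl.eventually_ne_atTop 0] with i hi
  unfold laplaceEigenvalue
  field_simp

lemma tendsto_sq_mul_const_div_laplaceEigenvalue (hl : Tendsto l F atTop) (c : ℝ) :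
    Tendsto (fun i => l i ^ 2 * (c / laplaceEigenvalue (l i))) F (𝓝 c) := by
  have h := (tendsto_const_nhds (x := c)).div (tendsto_laplaceEigenvalue_div_sq hl) one_ne_zero
  rw [div_one] at h
  refine h.congr fun i => ?_
  rw [Pi.div_apply, div_div_eq_mul_div, mul_comm c, mul_div_assoc]

lemma tendsto_mul_const_div_laplaceEigenvalue (hl : Tendsto l F atTop) (c : ℝ) :
    Tendsto (fun i => l i * (c / laplaceEigenvalue (l i))) F (𝓝 0) := by
  refine ((tendsto_sq_mul_const_div_laplaceEigenvalue hl c).div_atTop hl).congr' ?_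
  filter_upwards [hl.eventually_ne_atTop 0] with i hi
  field_simp

lemma tendsto_mul_laplaceEigenvalue_ratio_sub_one (hl : Tendsto l F atTop) (c : ℝ) :
    Tendsto (fun i => l i * (laplaceEigenvalue (l i + c) / laplaceEigenvalue (l i) - 1)) F
      (𝓝 (2 * c)) := by
  have h := (tendsto_sq_mul_const_div_laplaceEigenvalue hl c).mul
    (tendsto_linear_div_self hl 2 (c + 1))
  rw [mul_comm c] at h
  refine h.congr' ?_
  filter_upwards [hl.eventually_gt_atTop 0] with i hi
  unfold laplaceEigenvalue
  field_simp
  ring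

lemma tendsto_laplaceEigenvalue_ratio (hl : Tendsto l F atTop) (c : ℝ) :
    Tendsto (fun i => laplaceEigenvalue (l i + c) / laplaceEigenvalue (l i)) F (𝓝 1) := by
  have h := ((tendsto_mul_laplaceEigenvalue_ratio_sub_one hl c).div_atTop hl).const_add 1
  rw [add_zero] at h
  refine h.congr' ?_
  filter_upwards [hl.eventually_ne_atTop 0] with i hi
  rw [mul_div_cancel_left₀ _ hi, add_sub_cancel]

lemma tendsto_sq_mul_laplaceEigenvalue_ratio_second_difference (hl : Tendsto l F atTop) (c : ℝ) :
    Tendsto (fun i => l i ^ 2 * ((laplaceEigenvalue (l i + c) / laplaceEigenvalue (l i) - 1) +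
      (laplaceEigenvalue (l i - c) / laplaceEigenvalue (l i) - 1))) F (𝓝 (2 * c ^ 2)) := by
  refine (tendsto_sq_mul_const_div_laplaceEigenvalue hl (2 * c ^ 2)).congr' ?_
  filter_upwards [hl.eventually_gt_atTop 0] with i hi
  unfold laplaceEigenvalue
  field_simp
  ring

lemma tendsto_ladderCoeff_denom_div_sq (hl : Tendsto l F atTop) (c : ℝ) :
    Tendsto (fun i => (2 * (l i + c) + 1) * (2 * (l i + c) - 1) / l i ^ 2) F (𝓝 4) := by
  have h := (tendsto_linear_div_self hl 2 (2 * c + 1)).mul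
    (tendsto_linear_div_self hl 2 (2 * c - 1))
  norm_num only at h
  refine h.congr fun i => ?_
  ring

lemma tendsto_ladderCoeff (hl : Tendsto l F atTop) (hm : Tendsto (fun i => m i / l i) F (𝓝 q))
    (c : ℝ) :
    Tendsto (fun i => ladderCoeff (l i + c) (m i)) F (𝓝 ((1 - q ^ 2) / 4)) := by
  have h := (((tendsto_linear_div_self hl 1 c).pow 2).sub (hm.pow 2)).div
    (tendsto_ladderCoeff_denom_div_sq hl c) four_ne_zero
  rw [one_pow] at h
  refine h.congr' ?_
  filter_upwards [hl.eventually_ne_atTop 0] with i hi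
  rw [Pi.div_apply, one_mul, div_pow, div_pow, ← sub_div,
    div_div_div_cancel_right₀ (pow_ne_zero 2 hi), ladderCoeff]

lemma tendsto_mul_ladderCoeff_sub (hl : Tendsto l F atTop)
    (hm : Tendsto (fun i => m i / l i) F (𝓝 q)) (c d : ℝ) :
    Tendsto (fun i => l i * (ladderCoeff (l i + c) (m i) - ladderCoeff (l i + d) (m i))) F
      (𝓝 ((c - d) * q ^ 2 / 2)) := by
  have hdenom (e : ℝ) : ∀ᶠ i in F, (2 * (l i + e) + 1) * (2 * (l i + e) - 1) ≠ 0 :=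
    ((tendsto_ladderCoeff_denom_div_sq hl e).eventually_ne four_ne_zero).mono
      fun i hi => (div_ne_zero_iff.mp hi).1
  have hnum := ((((hm.pow 2).const_mul 4).sub ((hl.const_div_atTop 1).pow 2)).mul
    (tendsto_linear_div_self hl 2 (c + d))).const_mul (c - d)
  have h := hnum.div ((tendsto_ladderCoeff_denom_div_sq hl c).mul
    (tendsto_ladderCoeff_denom_div_sq hl d)) (by norm_num)
  convert h.congr' ?_ using 2
  · ring
  filter_upwards [hl.eventually_ne_atTop 0, hdenom c, hdenom d] with i hi hc hd
  rw [Pi.div_apply, ladderCoeff_sub_ladderCoeff _ hc hd]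
  field_simp
  ring

lemma tendsto_couplingCoeff (hl : Tendsto l F atTop)
    (hm : Tendsto (fun i => m i / l i) F (𝓝 q)) (c : ℝ) :
    Tendsto (fun i => couplingCoeff (l i + c) (m i)) F (𝓝 ((1 - q ^ 2) ^ 2 / 128)) := by
  have h := ((tendsto_ladderCoeff hl hm c).mul (tendsto_ladderCoeff hl hm (c + 1))).div_const 8
  convert h using 2
  · rw [couplingCoeff, add_assoc]
  · ring

lemma tendsto_mul_couplingCoeff_sub (hl : Tendsto l F atTop)
    (hm : Tendsto (fun i => m i / l i) F (𝓝 q)) (c d : ℝ) :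
    Tendsto (fun i => l i * (couplingCoeff (l i + c) (m i) - couplingCoeff (l i + d) (m i))) F
      (𝓝 ((c - d) * q ^ 2 * (1 - q ^ 2) / 32)) := by
  have h := (((tendsto_mul_ladderCoeff_sub hl hm c d).mul (tendsto_ladderCoeff hl hm (c + 1))).add
    ((tendsto_ladderCoeff hl hm d).mul
      (tendsto_mul_ladderCoeff_sub hl hm (c + 1) (d + 1)))).div_const 8
  convert h using 2
  · rw [couplingCoeff_sub_couplingCoeff, add_assoc, add_assoc]
    ring
  · ring

lemma tendsto_sq_mul_laplaceEigenvalue_ratio_sub_one_add_sq_div (hl : Tendsto l F atTop)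
    (c b : ℝ) :
    Tendsto (fun i => l i ^ 2 *
      ((laplaceEigenvalue (l i + c) / laplaceEigenvalue (l i) - 1 +
          b / laplaceEigenvalue (l i)) ^ 2 /
        (laplaceEigenvalue (l i + c) / laplaceEigenvalue (l i)))) F (𝓝 (4 * c ^ 2)) := by
  have h := (((tendsto_mul_laplaceEigenvalue_ratio_sub_one hl c).add
    (tendsto_mul_const_div_laplaceEigenvalue hl b)).pow 2).div
      (tendsto_laplaceEigenvalue_ratio hl c) one_ne_zero
  convert h using 2
  · rw [Pi.div_apply]
    ring
  · ring

lemma tendsto_sq_mul_curvatureBracket (hl : Tendsto l F atTop)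
    (hm : Tendsto (fun i => m i / l i) F (𝓝 q)) :
    Tendsto (fun i => l i ^ 2 * curvatureBracket (l i) (m i)) F (𝓝 (q ^ 2 * (1 - q ^ 2))) := by
  have hratio_ne (c : ℝ) :
      ∀ᶠ i in F, laplaceEigenvalue (l i + c) / laplaceEigenvalue (l i) ≠ 0 :=
    (tendsto_laplaceEigenvalue_ratio hl c).eventually_ne one_ne_zero
  -- `a₊ δ₊ + a₋ δ₋ = (a₊ - a₋) δ₊ + a₋ (δ₊ + δ₋)`
  have hlinear :=
    (((tendsto_mul_couplingCoeff_sub hl hm 1 (-1)).mul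
      (tendsto_mul_laplaceEigenvalue_ratio_sub_one hl 2)).add
    ((tendsto_couplingCoeff hl hm (-1)).mul
      (tendsto_sq_mul_laplaceEigenvalue_ratio_second_difference hl 2))).const_mul 4
  have hupper := (tendsto_couplingCoeff hl hm 1).mul
    (tendsto_sq_mul_laplaceEigenvalue_ratio_sub_one_add_sq_div hl 2 12)
  have hlower := (tendsto_couplingCoeff hl hm (-1)).mul
    (tendsto_sq_mul_laplaceEigenvalue_ratio_sub_one_add_sq_div hl (-2) 12)
  have hdiag := ((tendsto_mul_const_div_laplaceEigenvalue hl 12).pow 2).mul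
    (((((tendsto_ladderCoeff hl hm 0).add (tendsto_ladderCoeff hl hm 1)).sub_const
      (1 / 5)).pow 2).div_const 8)
  convert (((hlinear.sub hupper).sub hlower).sub hdiag).congr' ?_ using 2
  · ring
  filter_upwards [hratio_ne 2, hratio_ne (-2)] with i hpos hneg
  simp only [← sub_eq_add_neg, add_zero] at hneg ⊢
  rw [curvatureBracket, couplingWeight_eq_sub_sq_div hpos, couplingWeight_eq_sub_sq_div hneg]
  ring

end Asymptotics

theorem asymptotic_sectional_curvature_rp2_general
    {ι : Type*} {F : Filter ι} {l : ι → ℕ} {m : ι → ℤ} {q : ℝ} (hl : Tendsto l F atTop)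
    (hlim : Tendsto (fun i => (m i : ℝ) / (l i : ℝ)) F (𝓝 q)) :
    Tendsto (fun i => Cpe (l i) (m i)) F
      (𝓝 (-(525 / (32 * Real.pi)) * q ^ 4 * (1 - q ^ 2))) := by
  have hl' : Tendsto (fun i => (l i : ℝ)) F atTop := tendsto_natCast_atTop_atTop.comp hl
  have h := ((hlim.pow 2).const_mul (-(525 / (32 * Real.pi)))).mul
    (tendsto_sq_mul_curvatureBracket hl' hlim)
  convert h.congr' ?_ using 2
  · ring
  filter_upwards [hl'.eventually_ne_atTop 0] with i hi
  rw [Cpe_eq_curvatureBracket]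
  field_simp

theorem asymptotic_sectional_curvature_rp2
    (q : ℝ) (hq : q ∈ Set.Icc (-1 : ℝ) 1) (m : ℕ → ℤ)
    (hm : ∀ l : ℕ, 3 ≤ l → |m l| ≤ (l : ℤ))
    (hlim : Filter.Tendsto (fun l : ℕ => (m l : ℝ) / (l : ℝ)) Filter.atTop (nhds q)) :
    Filter.Tendsto (fun l : ℕ => Cpe l (m l)) Filter.atTop
      (nhds (-(525 / (32 * Real.pi)) * q ^ 4 * (1 - q ^ 2))) :=
  asymptotic_sectional_curvature_rp2_general tendsto_id hlim
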